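/- Suppose the transition kernel f : S → A → S → ℝ is fixed (independent of the parameter t) with f s a s' > 0 for all arguments, while only the policy π depends on t. Then for every t ∈ ℝ the derivative of the stage-k expectation E_k(t) = Σ_τ η(s_k,a_k) · P_k(t)(τ) equals Σ_τ η(s_k,a_k) · P_k(t)(τ) · Σ_{i=0}^{k} (d/dt) log(π t s_i a_i). (Policy-parameter specialization of Lemma 1, underlying the estimator for the gradient of the in-sim distribution with respect to the policy parameters.) -/

import Mathlib

/-!
Along a fixed trajectory the policy enters the weight only through the product of the probabilities
of the chosen actions; the initial weight and the transition kernel form a constant factor. Since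
`g' = g * logDeriv g` wherever `g ≠ 0`, and the logarithmic derivative turns products into sums,
differentiating the weight multiplies it by the sum of the logarithmic derivatives of the policy
along the trajectory. The set of trajectories is finite, so one may differentiate term by term.
-/

section LogDeriv

variable {𝕜 𝕜' ι : Type*} [NontriviallyNormedField 𝕜] [NontriviallyNormedField 𝕜']
  [NormedAlgebra 𝕜 𝕜'] {t : 𝕜}

theorem hasDerivAt_mul_logDeriv {g : 𝕜 → 𝕜'} (hg : DifferentiableAt 𝕜 g t) (hg0 : g t ≠ 0) :
    HasDerivAt g (g t * logDeriv g t) t := by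
  rw [logDeriv_apply, mul_div_cancel₀ _ hg0]
  exact hg.hasDerivAt

theorem hasDerivAt_prod_mul_sum_logDeriv (s : Finset ι) {g : ι → 𝕜 → 𝕜'}
    (hg : ∀ i ∈ s, DifferentiableAt 𝕜 (g i) t) (hg0 : ∀ i ∈ s, g i t ≠ 0) :
    HasDerivAt (fun x ↦ ∏ i ∈ s, g i x) ((∏ i ∈ s, g i t) * ∑ i ∈ s, logDeriv (g i) t) t := by
  rw [← logDeriv_prod hg0 hg]
  exact hasDerivAt_mul_logDeriv (.fun_finsetProd hg) (Finset.prod_ne_zero_iff.mpr hg0)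

end LogDeriv

/-- State-action trajectories `((s_0, …, s_k), (a_0, …, a_k))`; "length `k`" counts transitions, so
there are `k + 1` states and `k + 1` actions. -/
abbrev Trajectory (S A : Type*) (k : ℕ) : Type _ :=
  (Fin (k + 1) → S) × (Fin (k + 1) → A)

namespace Trajectory

variable {S A : Type*} {k : ℕ}

/-- The weight `P_k(τ)` of a trajectory under the initial weight `ρ0`, the transition kernel `f` and
the policy `π`. The action `a_k` has no following transition, so its policy factor stands outside
the product. -/
def weight {R : Type*} [CommMonoid R] (ρ0 : S → R) (f : S → A → S → R) (π : S → A → R)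
    (τ : Trajectory S A k) : R :=
  ρ0 (τ.1 0) * π (τ.1 (Fin.last k)) (τ.2 (Fin.last k)) *
    ∏ i : Fin k, (f (τ.1 i.castSucc) (τ.2 i.castSucc) (τ.1 i.succ) *
      π (τ.1 i.castSucc) (τ.2 i.castSucc))

theorem weight_eq_mul_prod_policy {R : Type*} [CommMonoid R] (ρ0 : S → R) (f : S → A → S → R)
    (π : S → A → R) (τ : Trajectory S A k) :
    τ.weight ρ0 f π =
      (ρ0 (τ.1 0) * ∏ i : Fin k, f (τ.1 i.castSucc) (τ.2 i.castSucc) (τ.1 i.succ)) *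
        ∏ i, π (τ.1 i) (τ.2 i) := by
  rw [weight, Finset.prod_mul_distrib, Fin.prod_univ_castSucc, mul_mul_mul_comm,
    mul_comm (π _ _)]

theorem hasDerivAt_weight {𝕜 𝕜' : Type*} [NontriviallyNormedField 𝕜] [NontriviallyNormedField 𝕜']
    [NormedAlgebra 𝕜 𝕜'] (ρ0 : S → 𝕜') (f : S → A → S → 𝕜') {π : 𝕜 → S → A → 𝕜'} {t : 𝕜}
    (τ : Trajectory S A k) (hπ : ∀ i, DifferentiableAt 𝕜 (fun x ↦ π x (τ.1 i) (τ.2 i)) t)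
    (hπ0 : ∀ i, π t (τ.1 i) (τ.2 i) ≠ 0) :
    HasDerivAt (fun x ↦ τ.weight ρ0 f (π x))
      (τ.weight ρ0 f (π t) * ∑ i, logDeriv (fun x ↦ π x (τ.1 i) (τ.2 i)) t) t := by
  simp only [weight_eq_mul_prod_policy, mul_assoc (ρ0 _ * _)]
  exact (hasDerivAt_prod_mul_sum_logDeriv Finset.univ
    (fun i _ ↦ hπ i) (fun i _ ↦ hπ0 i)).const_mul _

end Trajectory

theorem markov_chain_sensitivity_policy_params_general
    {𝕜 𝕜' S A : Type*} [NontriviallyNormedField 𝕜] [NontriviallyNormedField 𝕜']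
    [NormedAlgebra 𝕜 𝕜'] [Fintype S] [Fintype A] {k : ℕ} (ρ0 : S → 𝕜') (f : S → A → S → 𝕜')
    (F : Trajectory S A k → 𝕜') {π : 𝕜 → S → A → 𝕜'} {t : 𝕜}
    (hπ : ∀ s a, DifferentiableAt 𝕜 (fun x ↦ π x s a) t) (hπ0 : ∀ s a, π t s a ≠ 0) :
    HasDerivAt (fun x ↦ ∑ τ, F τ * τ.weight ρ0 f (π x))
      (∑ τ, F τ * τ.weight ρ0 f (π t) * ∑ i, logDeriv (fun x ↦ π x (τ.1 i) (τ.2 i)) t) t := by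
  simp only [mul_assoc]
  exact .fun_sum fun τ _ ↦
    (τ.hasDerivAt_weight ρ0 f (fun i ↦ hπ _ _) (fun i ↦ hπ0 _ _)).const_mul (F τ)

/-- Policy-parameter specialization of Lemma 1: with a fixed transition kernel `f`
and a parameterized policy `π`, the derivative of the stage-`k` expectation equals
`Σ_τ η(s_k,a_k) · P_k(t)(τ) · Σ_{i=0}^{k} d/dt log π(a_i|s_i)`. -/
theorem markov_chain_sensitivity_policy_params
    {S A : Type*} [Fintype S] [Fintype A] [Nonempty S] [Nonempty A]
    (k : ℕ) (ρ0 : S → ℝ) (η : S → A → ℝ)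
    (π : ℝ → S → A → ℝ) (f : S → A → S → ℝ)
    (hπpos : ∀ t s a, 0 < π t s a)
    (hπdiff : ∀ s a, Differentiable ℝ (fun t => π t s a))
    (hfpos : ∀ s a s', 0 < f s a s')
    (P : ℝ → ((Fin (k + 1) → S) × (Fin (k + 1) → A)) → ℝ)
    (hP : ∀ t τ, P t τ =
      ρ0 (τ.1 0) * π t (τ.1 (Fin.last k)) (τ.2 (Fin.last k)) *
        ∏ i : Fin k,
          (f (τ.1 i.castSucc) (τ.2 i.castSucc) (τ.1 i.succ) *
            π t (τ.1 i.castSucc) (τ.2 i.castSucc)))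
    (t : ℝ) :
    HasDerivAt
      (fun t => ∑ τ : (Fin (k + 1) → S) × (Fin (k + 1) → A),
        η (τ.1 (Fin.last k)) (τ.2 (Fin.last k)) * P t τ)
      (∑ τ : (Fin (k + 1) → S) × (Fin (k + 1) → A),
        η (τ.1 (Fin.last k)) (τ.2 (Fin.last k)) * P t τ *
          ∑ i : Fin (k + 1), deriv (fun t => Real.log (π t (τ.1 i) (τ.2 i))) t) t := by
  obtain rfl : P = fun t τ ↦ Trajectory.weight ρ0 f (π t) τ := funext₂ hP
  simpa only [← Real.deriv_log_comp_eq_logDeriv (hπdiff _ _ t) (hπpos t _ _).ne',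
    Function.comp_def] using
    markov_chain_sensitivity_policy_params_general ρ0 f
      (fun τ ↦ η (τ.1 (Fin.last k)) (τ.2 (Fin.last k))) (fun s a ↦ hπdiff s a t)
      (fun s a ↦ (hπpos t s a).ne')
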